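/- For a partition λ (weakly decreasing composition) and any basement permutation σ ∈ S_n, the permuted-basement non-symmetric Macdonald polynomial at q = 1 is independent of both σ and t, and equals the product of elementary symmetric polynomials indexed by the conjugate partition: E^σ_λ(x_1,…,x_n; 1, t) = e_{λ'}(x) = ∏_i e_{λ'_i}(x_1,…,x_n). -/

import Mathlib

open MvPolynomial Finset
open scoped Classical

noncomputable section

variable {n : ℕ}

/-- The augmented filling determined by a filling `G` of the non-basement boxes of
the diagram of shape `lam` with basement `σ`: the entry in row `r`, column `c`
(non-basement columns are `1,…,lam r`; column `0` is the basement, whose entry in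
row `r` is `σ r`). -/
def augFill (lam : Fin n → ℕ) (σ : Equiv.Perm (Fin n))
    (G : (r : Fin n) → Fin (lam r) → Fin n) (r : Fin n) (c : ℕ) : Fin n :=
  if h : 1 ≤ c ∧ c ≤ lam r then G r ⟨c - 1, by omega⟩ else σ r

/-- Non-attacking: no two equal entries in the same column (basement included via
distinctness of `σ`), and no two equal entries in adjacent columns where the
rightmost of the two boxes lies in a row strictly below the other. -/
def NonAttacking (lam : Fin n → ℕ) (F : Fin n → ℕ → Fin n) : Prop :=
  (∀ r r' c, r ≠ r' → 1 ≤ c → c ≤ lam r → c ≤ lam r' → F r c ≠ F r' c) ∧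
  (∀ r r' c, r < r' → (c = 0 ∨ c ≤ lam r) → c + 1 ≤ lam r' → F r c ≠ F r' (c + 1))

/-- The arm of the box in row `r`, column `c` of the augmented diagram of shape `lam`. -/
def armOf (lam : Fin n → ℕ) (r : Fin n) (c : ℕ) : ℕ :=
  (Finset.univ.filter (fun r' => r < r' ∧ lam r' ≤ lam r ∧ c ≤ lam r')).card +
  (Finset.univ.filter (fun r' => r' < r ∧ lam r' < lam r ∧ c - 1 ≤ lam r')).card

/-- The leg of the box in row `r`, column `c`: the number of boxes to its right. -/
def legOf (lam : Fin n → ℕ) (r : Fin n) (c : ℕ) : ℕ := lam r - c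

/-- The major index: the sum of `leg + 1` over all descents, where a descent is a
non-basement box whose entry is strictly larger than the entry directly to its left. -/
def majF (lam : Fin n → ℕ) (F : Fin n → ℕ → Fin n) : ℕ :=
  ∑ r : Fin n, ∑ c ∈ Finset.Icc 1 (lam r),
    if F r (c - 1) < F r c then legOf lam r c + 1 else 0

/-- The inversion-triple condition on the three values `a` (left), `b` (right),
`cc` (the third box), with ties broken as `b₁ < c₂ < a₃`. -/
def InvTriple (a b cc : Fin n) : Prop :=
  (cc < b ∧ b ≤ a) ∨ (b ≤ a ∧ a < cc) ∨ (a < cc ∧ cc < b)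

/-- The number of coinversions: type A and type B triples that are not inversion triples. -/
def coinvF (lam : Fin n → ℕ) (F : Fin n → ℕ → Fin n) : ℕ :=
  (∑ r : Fin n, ∑ r' : Fin n, ((Finset.Icc 1 (lam r')).filter (fun c =>
      r < r' ∧ lam r' ≤ lam r ∧ ¬ InvTriple (F r (c - 1)) (F r c) (F r' c))).card) +
  (∑ r : Fin n, ∑ r' : Fin n, ((Finset.Icc 1 (lam r)).filter (fun c =>
      r' < r ∧ lam r' < lam r ∧ c - 1 ≤ lam r' ∧
        ¬ InvTriple (F r (c - 1)) (F r c) (F r' (c - 1)))).card)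

variable (K : Type) [Field K]

/-- The weight monomial `x^F` of a filling. -/
def fweight (lam : Fin n → ℕ) (F : Fin n → ℕ → Fin n) : MvPolynomial (Fin n) K :=
  ∏ r : Fin n, ∏ c ∈ Finset.Icc 1 (lam r), X (F r c)

/-- The product `∏_{u : F(d(u)) ≠ F(u)} (1−t)/(1−q^{1+leg u} t^{1+arm u})` over
non-basement boxes whose entry differs from the entry directly to the left. -/
def denomProd (lam : Fin n → ℕ) (q t : K) (F : Fin n → ℕ → Fin n) : K :=
  ∏ r : Fin n, ∏ c ∈ Finset.Icc 1 (lam r),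
    if F r (c - 1) ≠ F r c then
      (1 - t) / (1 - q ^ (1 + legOf lam r c) * t ^ (1 + armOf lam r c)) else 1

/-- The permuted-basement non-symmetric Macdonald polynomial `E^σ_λ(x; q, t)`,
via the Haglund–Haiman–Loehr-type combinatorial formula over non-attacking fillings. -/
def macE (lam : Fin n → ℕ) (σ : Equiv.Perm (Fin n)) (q t : K) : MvPolynomial (Fin n) K :=
  ∑ G : ((r : Fin n) → Fin (lam r) → Fin n),
    if NonAttacking lam (augFill lam σ G) then
      C (q ^ majF lam (augFill lam σ G) * t ^ coinvF lam (augFill lam σ G) *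
          denomProd K lam q t (augFill lam σ G)) *
        fweight K lam (augFill lam σ G)
    else 0

section helpers

variable {K}

/-- Ranks with respect to an injective key give a geometric sum. -/
lemma rank_sum {ι : Type} (κ : ι → ℕ) (t : K) (S : Finset ι)
    (hκ : ∀ a ∈ S, ∀ b ∈ S, κ a = κ b → a = b) :
    ∑ b ∈ S, t ^ (S.filter (fun c => κ b < κ c)).card = ∑ i ∈ Finset.range S.card, t ^ i := by
  induction S using Finset.induction_on_min_value κ with
  | empty => simp
  | insert a s ha hmin ih =>
    have hlt : ∀ x ∈ s, κ a < κ x := by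
      intro x hx
      refine lt_of_le_of_ne (hmin x hx) ?_
      intro h
      have := hκ a (by simp) x (by simp [hx]) h
      exact ha (this ▸ hx)
    rw [Finset.sum_insert ha, Finset.card_insert_of_notMem ha, Finset.sum_range_succ,
      ← ih (fun a ha b hb => hκ a (by simp [ha]) b (by simp [hb])), add_comm]
    congr 1
    · refine Finset.sum_congr rfl fun b hb => ?_
      congr 2
      ext c
      simp only [Finset.mem_filter, Finset.mem_insert]
      constructor
      · rintro ⟨rfl | h, h2⟩
        · have := hlt b hb; omega
        · exact ⟨h, h2⟩
      · rintro ⟨h, h2⟩; exact ⟨Or.inr h, h2⟩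
    · congr 2
      ext c
      simp only [Finset.mem_filter, Finset.mem_insert]
      constructor
      · rintro ⟨rfl | h, h2⟩
        · omega
        · exact h
      · intro h; exact ⟨Or.inr h, hlt c h⟩

lemma inv_sum (t : K) (a : Fin n) (S : Finset (Fin n)) (ha : a ∉ S) :
    ∑ b ∈ S, t ^ ((S.erase b).filter (fun c => ¬ InvTriple a b c)).card =
      ∑ i ∈ Finset.range S.card, t ^ i := by
  rw [← rank_sum (fun x : Fin n => if x < a then x.1 + n else x.1) t S]
  · refine Finset.sum_congr rfl fun b hb => ?_
    congr 2
    ext c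
    have hba : b ≠ a := fun h => ha (h ▸ hb)
    rw [Finset.mem_filter, Finset.mem_filter, Finset.mem_erase]
    unfold InvTriple
    constructor
    · rintro ⟨⟨h1, h2⟩, h3⟩
      refine ⟨h2, ?_⟩
      have hca : c ≠ a := fun h => ha (h ▸ h2)
      have := b.2; have := c.2
      split_ifs <;> omega
    · rintro ⟨h2, h3⟩
      have hca : c ≠ a := fun h => ha (h ▸ h2)
      have := b.2; have := c.2
      refine ⟨⟨?_, h2⟩, ?_⟩
      · rintro rfl; exact lt_irrefl _ h3
      · split_ifs at h3 <;> omega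
  · intro b hb c hc h
    have := b.2; have := c.2
    split_ifs at h <;> omega

/-- Non-attacking condition between consecutive columns (truncated to length `m`). -/
def colOK {m : ℕ} (y x : Fin m → Fin n) : Prop :=
  Function.Injective x ∧ ∀ i j, i < j → y i ≠ x j

/-- Coinversions between consecutive columns. -/
def colCoinv {m : ℕ} (y x : Fin m → Fin n) : ℕ :=
  ∑ i : Fin m, ∑ j : Fin m, if i < j ∧ ¬ InvTriple (y i) (x i) (x j) then 1 else 0

/-- The factor of a column. -/
def colDen (t : K) {m : ℕ} (y x : Fin m → Fin n) : K :=
  ∏ i : Fin m, if y i ≠ x i then (1 - t) / (1 - t ^ (m - i.1)) else 1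

lemma colOK_cons {m : ℕ} (y : Fin (m + 1) → Fin n) (b : Fin n) (x : Fin m → Fin n)
    (S : Finset (Fin n)) :
    (colOK y (Fin.cons b x : Fin (m + 1) → Fin n) ∧
      Finset.univ.image (Fin.cons b x : Fin (m + 1) → Fin n) = S) ↔
    (b ∈ S ∧ y 0 ∉ S.erase b) ∧ (colOK (Fin.tail y) x ∧ Finset.univ.image x = S.erase b) := by
  have him : Finset.univ.image (Fin.cons b x : Fin (m + 1) → Fin n)
      = insert b (Finset.univ.image x) := by
    ext c
    simp [Fin.exists_fin_succ, eq_comm]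
  rw [him]
  unfold colOK
  rw [Fin.cons_injective_iff]
  constructor
  · rintro ⟨⟨⟨h1, h2⟩, h3⟩, rfl⟩
    have hb : b ∉ Finset.univ.image x := by simpa using h1
    rw [Finset.erase_insert hb]
    refine ⟨⟨by simp, ?_⟩, ⟨h2, ?_⟩, rfl⟩
    · intro h
      obtain ⟨j, -, hj⟩ := Finset.mem_image.1 h
      exact h3 0 j.succ (Fin.succ_pos j) (by simp [hj])
    · intro i j hij
      have := h3 i.succ j.succ (by simpa using hij)
      simpa [Fin.tail] using this
  · rintro ⟨⟨h1, h2⟩, ⟨h3, h4⟩, h5⟩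
    refine ⟨⟨⟨?_, h3⟩, ?_⟩, ?_⟩
    · rintro ⟨j, hj⟩
      have : x j ∈ S.erase b := h5 ▸ Finset.mem_image_of_mem _ (Finset.mem_univ _)
      simp [hj] at this
    · intro i j
      refine Fin.cases ?_ (fun j => ?_) j
      · intro h; simp at h
      · refine Fin.cases ?_ (fun i => ?_) i
        · intro _ h
          apply h2
          rw [h, ← h5]
          simp
        · intro h
          simpa [Fin.tail] using h4 i j (by simpa using h)
    · rw [h5, Finset.insert_erase h1]

lemma colCoinv_cons {m : ℕ} (y : Fin (m + 1) → Fin n) (b : Fin n) (x : Fin m → Fin n)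
    (hx : Function.Injective x) :
    colCoinv y (Fin.cons b x : Fin (m + 1) → Fin n) =
      ((Finset.univ.image x).filter (fun c => ¬ InvTriple (y 0) b c)).card
        + colCoinv (Fin.tail y) x := by
  unfold colCoinv
  rw [Fin.sum_univ_succ, Finset.card_filter, Finset.sum_image (fun a _ b _ h => hx h)]
  congr 1
  · rw [Fin.sum_univ_succ]
    simp
  · refine Finset.sum_congr rfl fun i _ => ?_
    rw [Fin.sum_univ_succ]
    simp only [Fin.not_lt_zero, false_and, if_false, zero_add, Fin.succ_lt_succ_iff,
      Fin.cons_succ, Fin.tail]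
    rfl

lemma colDen_cons (t : K) {m : ℕ} (y : Fin (m + 1) → Fin n) (b : Fin n) (x : Fin m → Fin n) :
    colDen t y (Fin.cons b x : Fin (m + 1) → Fin n) =
      (if y 0 ≠ b then (1 - t) / (1 - t ^ (m + 1)) else 1) * colDen t (Fin.tail y) x := by
  unfold colDen
  rw [Fin.prod_univ_succ]
  simp only [Fin.cons_zero, Fin.cons_succ, Fin.tail, Fin.val_zero, Fin.val_succ, Nat.sub_zero,
    Nat.add_sub_add_right]
  rfl

lemma col_sum (t : K) (ht : ∀ k, 0 < k → t ^ k ≠ 1) (m : ℕ) :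
    ∀ (y : Fin m → Fin n) (S : Finset (Fin n)), S.card = m →
    ∑ x : Fin m → Fin n, (if colOK y x ∧ Finset.univ.image x = S then
      t ^ colCoinv y x * colDen t y x else 0) = 1 := by
  induction m with
  | zero =>
    intro y S hS
    rw [Finset.card_eq_zero] at hS
    subst hS
    simp [colOK, colCoinv, colDen, Function.injective_of_subsingleton]
  | succ m ih =>
    intro y S hS
    rw [← (Fin.consEquiv (fun _ : Fin (m + 1) => Fin n)).sum_comp, Fintype.sum_prod_type]
    have key : ∀ b : Fin n, ∑ x : Fin m → Fin n,
        (if colOK y (Fin.cons b x : Fin (m + 1) → Fin n) ∧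
          Finset.univ.image (Fin.cons b x : Fin (m + 1) → Fin n) = S then
          t ^ colCoinv y (Fin.cons b x : Fin (m + 1) → Fin n) *
            colDen t y (Fin.cons b x : Fin (m + 1) → Fin n) else 0)
        = if b ∈ S ∧ y 0 ∉ S.erase b then
            t ^ ((S.erase b).filter (fun c => ¬ InvTriple (y 0) b c)).card *
            (if y 0 ≠ b then (1 - t) / (1 - t ^ (m + 1)) else 1) else 0 := by
      intro b
      by_cases hb : b ∈ S ∧ y 0 ∉ S.erase b
      · rw [if_pos hb]
        have hc : (S.erase b).card = m := by rw [Finset.card_erase_of_mem hb.1, hS]; rfl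
        have e := ih (Fin.tail y) (S.erase b) hc
        generalize hA : (t ^ ((S.erase b).filter (fun c => ¬ InvTriple (y 0) b c)).card *
            (if y 0 ≠ b then (1 - t) / (1 - t ^ (m + 1)) else 1)) = A
        rw [← mul_one A, ← e, Finset.mul_sum]
        refine Finset.sum_congr rfl fun x _ => ?_
        by_cases h : colOK (Fin.tail y) x ∧ Finset.univ.image x = S.erase b
        · rw [if_pos ((colOK_cons y b x S).2 ⟨hb, h⟩), if_pos h, colCoinv_cons _ _ _ h.1.1,
            colDen_cons, h.2, ← hA]
          ring
        · rw [if_neg (fun h' => h ((colOK_cons y b x S).1 h').2), if_neg h, mul_zero]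
      · rw [if_neg hb]
        refine Finset.sum_eq_zero fun x _ => ?_
        rw [if_neg (fun h' => hb ((colOK_cons y b x S).1 h').1)]
    refine (Finset.sum_congr rfl fun b _ => key b).trans ?_
    by_cases hy : y 0 ∈ S
    · rw [Finset.sum_eq_single (y 0)]
      · rw [if_pos ⟨hy, by simp⟩]
        have : (S.erase (y 0)).filter (fun c => ¬ InvTriple (y 0) (y 0) c) = ∅ := by
          rw [Finset.filter_eq_empty_iff]
          intro c hc
          have hne : c ≠ y 0 := (Finset.mem_erase.1 hc).1
          simp only [InvTriple]
          omega
        rw [this]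
        simp
      · intro b _ hb
        rw [if_neg]
        rintro ⟨h1, h2⟩
        exact h2 (Finset.mem_erase.2 ⟨hb.symm, hy⟩)
      · simp
    · have h1 : ∀ b, (b ∈ S ∧ y 0 ∉ S.erase b) ↔ b ∈ S := fun b =>
        ⟨fun h => h.1, fun h => ⟨h, fun h' => hy (Finset.mem_of_mem_erase h')⟩⟩
      simp only [h1]
      rw [← Finset.sum_filter, Finset.filter_mem_eq_inter, Finset.univ_inter]
      have h2 : ∀ b ∈ S, t ^ ((S.erase b).filter (fun c => ¬ InvTriple (y 0) b c)).card *
            (if y 0 ≠ b then (1 - t) / (1 - t ^ (m + 1)) else 1) =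
            t ^ ((S.erase b).filter (fun c => ¬ InvTriple (y 0) b c)).card *
              ((1 - t) / (1 - t ^ (m + 1))) := by
        intro b hb
        rw [if_pos]
        rintro rfl
        exact hy hb
      rw [Finset.sum_congr rfl h2, ← Finset.sum_mul, inv_sum t _ _ hy, hS]
      have h3 : (1 - t ^ (m + 1)) ≠ 0 := fun h =>
        ht (m + 1) (Nat.succ_pos m) (sub_eq_zero.1 h).symm
      rw [mul_div_assoc', geom_sum_mul_neg, div_self h3]

/-- The weight of a column given the previous one. -/
def colW (t : K) {m : ℕ} (y x : Fin m → Fin n) : MvPolynomial (Fin n) K :=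
  if colOK y x then C (t ^ colCoinv y x * colDen t y x) * ∏ i, X (x i) else 0

lemma colW_sum (t : K) (ht : ∀ k, 0 < k → t ^ k ≠ 1) (m : ℕ) (y : Fin m → Fin n) :
    ∑ x : Fin m → Fin n, colW t y x = esymm (Fin n) K m := by
  have h1 : ∀ x : Fin m → Fin n, colW t y x =
      ∑ S ∈ Finset.powersetCard m Finset.univ,
        C (if colOK y x ∧ Finset.univ.image x = S then
          t ^ colCoinv y x * colDen t y x else 0) * ∏ i ∈ S, X i := by
    intro x
    unfold colW
    split_ifs with h
    · rw [Finset.sum_eq_single (Finset.univ.image x)]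
      · rw [if_pos ⟨h, rfl⟩, Finset.prod_image (fun a _ b _ h' => h.1 h')]
      · intro S _ hS
        rw [if_neg (fun h' => hS h'.2.symm)]
        simp
      · intro h'
        exfalso
        apply h'
        simp [Finset.mem_powersetCard, Finset.card_image_of_injective _ h.1]
    · symm
      refine Finset.sum_eq_zero fun S _ => ?_
      rw [if_neg (fun h' => h h'.1)]
      simp
  rw [Finset.sum_congr rfl fun x _ => h1 x, Finset.sum_comm]
  unfold esymm
  refine Finset.sum_congr rfl fun S hS => ?_
  rw [← Finset.sum_mul, ← map_sum, col_sum t ht m y S (Finset.mem_powersetCard.1 hS).2]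
  simp

lemma chain_sum {R Y : Type} [CommRing R] (L : ℕ) :
    ∀ (A : Fin L → Type) [∀ c, Fintype (A c)] (ext : ∀ c, A c → Y)
    (w : ∀ c, Y → A c → R) (W : Fin L → R) (_ : ∀ c y, ∑ x, w c y x = W c) (y0 : Y),
    ∑ f : (∀ c, A c), ∏ c : Fin L,
      w c ((Fin.cons y0 (fun c => ext c (f c)) : Fin (L + 1) → Y) c.castSucc) (f c) =
      ∏ c, W c := by
  induction L with
  | zero => intros; simp
  | succ L ih =>
    intro A _ ext w W h y0
    rw [← (Fin.consEquiv A).sum_comp, Fintype.sum_prod_type]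
    simp only [Fin.prod_univ_succ]
    rw [← h 0 y0, Finset.sum_mul]
    refine Finset.sum_congr rfl fun a _ => ?_
    rw [← ih (fun c => A c.succ) (fun c => ext c.succ) (fun c => w c.succ) (fun c => W c.succ)
      (fun c => h c.succ) (ext 0 a), Finset.mul_sum]
    refine Finset.sum_congr rfl fun f _ => ?_
    simp only [Fin.consEquiv, Equiv.coe_fn_mk]
    congr 1
    refine Finset.prod_congr rfl fun c _ => ?_
    simp only [Fin.cons_succ]
    congr 1
    rw [← Fin.succ_castSucc, Fin.cons_succ]
    refine Fin.cases ?_ (fun j => ?_) c.castSucc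
    · simp
    · simp

/-- The length of column `c + 1`. -/
def colLen (lam : Fin n → ℕ) (c : ℕ) : ℕ := (Finset.univ.filter (fun i => c + 1 ≤ lam i)).card

lemma colLen_le (lam : Fin n → ℕ) (c : ℕ) : colLen lam c ≤ n := by
  unfold colLen
  exact (Finset.card_le_univ _).trans (by simp)

lemma lt_colLen (lam : Fin n → ℕ) (hpart : ∀ i j : Fin n, i ≤ j → lam j ≤ lam i)
    (r : Fin n) (c : ℕ) : r.1 < colLen lam c ↔ c < lam r := by
  unfold colLen
  constructor
  · intro h
    by_contra hc
    have : Finset.univ.filter (fun i => c + 1 ≤ lam i) ⊆ Finset.Iio r := by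
      intro i hi
      rw [Finset.mem_filter] at hi
      rw [Finset.mem_Iio]
      by_contra hir
      have := hpart r i (not_lt.1 hir)
      omega
    have := Finset.card_le_card this
    rw [Fin.card_Iio] at this
    omega
  · intro h
    have : Finset.Iic r ⊆ Finset.univ.filter (fun i => c + 1 ≤ lam i) := by
      intro i hi
      rw [Finset.mem_Iic] at hi
      rw [Finset.mem_filter]
      have := hpart i r hi
      exact ⟨Finset.mem_univ _, by omega⟩
    have := Finset.card_le_card this
    rw [Fin.card_Iic] at this
    omega

@[to_additive]
lemma prod_castLE {M : Type} [CommMonoid M] {m : ℕ} (h : m ≤ n) (g : Fin n → M) :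
    ∏ r : Fin n, (if r.1 < m then g r else 1) = ∏ i : Fin m, g (Fin.castLE h i) := by
  rw [← Finset.prod_filter]
  symm
  refine Finset.prod_bij (fun i _ => Fin.castLE h i) ?_ ?_ ?_ ?_
  · intro i _; simp
  · intro i _ j _ hij; exact Fin.castLE_injective h hij
  · intro r hr
    rw [Finset.mem_filter] at hr
    exact ⟨⟨r.1, hr.2⟩, Finset.mem_univ _, rfl⟩
  · intro i _; rfl

@[to_additive]
lemma prod_boxes {M : Type} [CommMonoid M] (lam : Fin n → ℕ)
    (hpart : ∀ i j : Fin n, i ≤ j → lam j ≤ lam i) (g : Fin n → ℕ → M) :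
    ∏ r : Fin n, ∏ c ∈ Finset.Icc 1 (lam r), g r c =
      ∏ c : Fin (Finset.univ.sup lam), ∏ i : Fin (colLen lam c),
        g (Fin.castLE (colLen_le lam c) i) (c + 1) := by
  have h1 : ∀ r : Fin n, ∏ c ∈ Finset.Icc 1 (lam r), g r c =
      ∏ c : Fin (Finset.univ.sup lam), if r.1 < colLen lam c then g r (c + 1) else 1 := by
    intro r
    rw [Fin.prod_univ_eq_prod_range (fun c => if r.1 < colLen lam c then g r (c + 1) else 1),
      ← Finset.prod_filter]
    symm
    refine Finset.prod_bij (fun c _ => c + 1) ?_ ?_ ?_ ?_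
    · intro c hc
      rw [Finset.mem_filter, lt_colLen lam hpart] at hc
      rw [Finset.mem_Icc]
      omega
    · intro a _ b _ h; omega
    · intro c hc
      rw [Finset.mem_Icc] at hc
      refine ⟨c - 1, ?_, by omega⟩
      rw [Finset.mem_filter, lt_colLen lam hpart, Finset.mem_range]
      have := Finset.le_sup (f := lam) (Finset.mem_univ r)
      omega
    · intro c _; rfl
  rw [Finset.prod_congr rfl fun r _ => h1 r, Finset.prod_comm]
  exact Finset.prod_congr rfl fun c _ => prod_castLE (colLen_le lam c) (fun r => g r (c + 1))

/-- The entries of column `c` in the first `m` rows. -/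
def colOf (lam : Fin n → ℕ) (F : Fin n → ℕ → Fin n) (c d : ℕ) : Fin (colLen lam c) → Fin n :=
  fun i => F (Fin.castLE (colLen_le lam c) i) d

lemma nonAttacking_iff (lam : Fin n → ℕ) (hpart : ∀ i j : Fin n, i ≤ j → lam j ≤ lam i)
    (F : Fin n → ℕ → Fin n) :
    NonAttacking lam F ↔ ∀ c : Fin (Finset.univ.sup lam),
      colOK (colOf lam F c c) (colOf lam F c (c + 1)) := by
  unfold NonAttacking colOK colOf
  constructor
  · rintro ⟨h1, h2⟩ c
    have hl : ∀ i : Fin (colLen lam c), c.1 < lam (Fin.castLE (colLen_le lam c) i) := fun i =>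
      (lt_colLen lam hpart _ _).1 i.2
    constructor
    · intro i j hij
      by_contra hne
      exact h1 _ _ (c + 1) (fun h => hne (Fin.castLE_injective _ h)) (by omega)
        (hl i) (hl j) hij
    · intro i j hij
      exact h2 _ _ c hij (Or.inr (hl i).le) (hl j)
  · intro h
    constructor
    · intro r r' c hne hc hr hr' heq
      have hs := Finset.le_sup (f := lam) (Finset.mem_univ r)
      obtain ⟨d, rfl⟩ : ∃ d, c = d + 1 := ⟨c - 1, by omega⟩
      have := (h ⟨d, by omega⟩).1
        (a₁ := ⟨r.1, (lt_colLen lam hpart _ _).2 hr⟩) (a₂ := ⟨r'.1, (lt_colLen lam hpart _ _).2 hr'⟩)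
        heq
      exact hne (Fin.ext (Fin.mk.inj_iff.1 this))
    · intro r r' c hlt _ hr'
      have hs := Finset.le_sup (f := lam) (Finset.mem_univ r')
      have hr : c < lam r := lt_of_lt_of_le hr' (hpart r r' hlt.le)
      exact (h ⟨c, by omega⟩).2 ⟨r.1, (lt_colLen lam hpart _ _).2 hr⟩
        ⟨r'.1, (lt_colLen lam hpart _ _).2 hr'⟩ hlt

lemma coinvF_eq (lam : Fin n → ℕ) (hpart : ∀ i j : Fin n, i ≤ j → lam j ≤ lam i)
    (F : Fin n → ℕ → Fin n) :
    coinvF lam F = ∑ c : Fin (Finset.univ.sup lam),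
      colCoinv (colOf lam F c c) (colOf lam F c (c + 1)) := by
  unfold coinvF
  have h2 : (∑ r : Fin n, ∑ r' : Fin n, ((Finset.Icc 1 (lam r)).filter (fun c =>
      r' < r ∧ lam r' < lam r ∧ c - 1 ≤ lam r' ∧
        ¬ InvTriple (F r (c - 1)) (F r c) (F r' (c - 1)))).card) = 0 := by
    refine Finset.sum_eq_zero fun r _ => Finset.sum_eq_zero fun r' _ => ?_
    rw [Finset.card_eq_zero, Finset.filter_eq_empty_iff]
    rintro c - ⟨h, h', -⟩
    have := hpart r' r h.le
    omega
  rw [h2, add_zero, Finset.sum_comm]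
  have h3 : ∀ r' : Fin n, (∑ r : Fin n, ((Finset.Icc 1 (lam r')).filter (fun c =>
      r < r' ∧ lam r' ≤ lam r ∧ ¬ InvTriple (F r (c - 1)) (F r c) (F r' c))).card) =
      ∑ c ∈ Finset.Icc 1 (lam r'), ∑ r : Fin n,
        if r < r' ∧ ¬ InvTriple (F r (c - 1)) (F r c) (F r' c) then 1 else 0 := by
    intro r'
    rw [Finset.sum_comm]
    refine Finset.sum_congr rfl fun r _ => ?_
    rw [Finset.card_filter]
    refine Finset.sum_congr rfl fun c _ => ?_
    refine if_congr ?_ rfl rfl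
    constructor
    · rintro ⟨h, _, h'⟩; exact ⟨h, h'⟩
    · rintro ⟨h, h'⟩; exact ⟨h, hpart r r' h.le, h'⟩
  rw [Finset.sum_congr rfl fun r _ => h3 r, sum_boxes lam hpart (fun r' c => ∑ r : Fin n,
        if r < r' ∧ ¬ InvTriple (F r (c - 1)) (F r c) (F r' c) then (1 : ℕ) else 0)]
  refine Finset.sum_congr rfl fun c _ => ?_
  unfold colCoinv
  refine Eq.trans ?_ Finset.sum_comm
  refine Finset.sum_congr rfl fun j _ => ?_
  refine Eq.trans ?_ (sum_castLE (colLen_le lam c) (fun r : Fin n =>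
    if r < Fin.castLE (colLen_le lam c) j ∧ ¬ InvTriple (F r c) (F r (c + 1))
      (F (Fin.castLE (colLen_le lam c) j) (c + 1)) then (1 : ℕ) else 0))
  refine Finset.sum_congr rfl fun r _ => ?_
  simp only [Nat.add_sub_cancel]
  by_cases h : r.1 < colLen lam c
  · rw [if_pos h]
  · rw [if_neg h, if_neg]
    rintro ⟨h', -⟩
    apply h
    have h1 : r.1 < j.1 := h'
    exact h1.trans j.2

lemma armOf_eq (lam : Fin n → ℕ) (hpart : ∀ i j : Fin n, i ≤ j → lam j ≤ lam i)
    (c : ℕ) (i : Fin (colLen lam c)) :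
    1 + armOf lam (Fin.castLE (colLen_le lam c) i) (c + 1) = colLen lam c - i.1 := by
  unfold armOf
  set r := Fin.castLE (colLen_le lam c) i with hr
  have hri : r.1 = i.1 := rfl
  have h2 : (Finset.univ.filter (fun r' => r' < r ∧ lam r' < lam r ∧ c + 1 - 1 ≤ lam r')) = ∅ := by
    rw [Finset.filter_eq_empty_iff]
    rintro r' - ⟨h, h', -⟩
    have := hpart r' r h.le
    omega
  have h1 : (Finset.univ.filter (fun r' => r < r' ∧ lam r' ≤ lam r ∧ c + 1 ≤ lam r')) =
      (Finset.univ.filter (fun i => c + 1 ≤ lam i)) \ Finset.Iic r := by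
    ext r'
    simp only [Finset.mem_filter, Finset.mem_sdiff, Finset.mem_univ, true_and, Finset.mem_Iic,
      not_le]
    constructor
    · rintro ⟨h, _, h'⟩; exact ⟨h', h⟩
    · rintro ⟨h', h⟩; exact ⟨h, hpart r r' h.le, h'⟩
  have h3 : Finset.Iic r ⊆ Finset.univ.filter (fun i => c + 1 ≤ lam i) := by
    intro s hs
    rw [Finset.mem_Iic] at hs
    rw [Finset.mem_filter]
    have := hpart s r hs
    have h4 : c < lam r := (lt_colLen lam hpart r c).1 i.2
    exact ⟨Finset.mem_univ _, by omega⟩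
  rw [h2, h1, Finset.card_sdiff_of_subset h3, Fin.card_Iic, hri, Finset.card_empty]
  have := i.2
  unfold colLen at *
  omega

lemma denomProd_eq (lam : Fin n → ℕ) (hpart : ∀ i j : Fin n, i ≤ j → lam j ≤ lam i) (t : K)
    (F : Fin n → ℕ → Fin n) :
    denomProd K lam 1 t F = ∏ c : Fin (Finset.univ.sup lam),
      colDen t (colOf lam F c c) (colOf lam F c (c + 1)) := by
  unfold denomProd
  rw [prod_boxes lam hpart (fun r c => if F r (c - 1) ≠ F r c then
      (1 - t) / (1 - 1 ^ (1 + legOf lam r c) * t ^ (1 + armOf lam r c)) else 1)]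
  refine Finset.prod_congr rfl fun c _ => ?_
  unfold colDen
  refine Finset.prod_congr rfl fun i _ => ?_
  rw [armOf_eq lam hpart, one_pow, one_mul]
  rfl

lemma summand_eq (lam : Fin n → ℕ) (hpart : ∀ i j : Fin n, i ≤ j → lam j ≤ lam i) (t : K)
    (F : Fin n → ℕ → Fin n) :
    (if NonAttacking lam F then
      C ((1 : K) ^ majF lam F * t ^ coinvF lam F * denomProd K lam 1 t F) * fweight K lam F
    else 0) = ∏ c : Fin (Finset.univ.sup lam),
      colW t (colOf lam F c c) (colOf lam F c (c + 1)) := by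
  unfold colW
  rw [Finset.prod_ite_zero]
  have hiff := nonAttacking_iff lam hpart F
  by_cases h : NonAttacking lam F
  swap
  · rw [if_neg h, if_neg (fun h' => h (hiff.2 fun c => h' c (Finset.mem_univ c)))]
  · rw [if_pos h, if_pos (fun c _ => hiff.1 h c), one_pow, one_mul, coinvF_eq lam hpart, denomProd_eq lam hpart, Finset.prod_mul_distrib,
      ← Finset.prod_pow_eq_pow_sum, ← Finset.prod_mul_distrib, map_prod]
    congr 1
    unfold fweight
    rw [prod_boxes lam hpart (fun r c => (X (F r c) : MvPolynomial (Fin n) K))]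
    rfl

/-- Fillings as sequences of columns. -/
def colEquiv (lam : Fin n → ℕ) (hpart : ∀ i j : Fin n, i ≤ j → lam j ≤ lam i) :
    ((c : Fin (Finset.univ.sup lam)) → Fin (colLen lam c) → Fin n) ≃
      ((r : Fin n) → Fin (lam r) → Fin n) where
  toFun f r c := f ⟨c.1, lt_of_lt_of_le c.2 (Finset.le_sup (f := lam) (Finset.mem_univ r))⟩
    ⟨r.1, (lt_colLen lam hpart r c.1).2 c.2⟩
  invFun G c i := G (Fin.castLE (colLen_le lam c) i) ⟨c.1, (lt_colLen lam hpart _ _).1 i.2⟩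
  left_inv _ := rfl
  right_inv _ := rfl

/-- Extension of a column by the basement. -/
def colExt (σ : Equiv.Perm (Fin n)) {m : ℕ} (x : Fin m → Fin n) (r : Fin n) : Fin n :=
  if h : r.1 < m then x ⟨r.1, h⟩ else σ r

lemma augFill_colEquiv (lam : Fin n → ℕ) (hpart : ∀ i j : Fin n, i ≤ j → lam j ≤ lam i)
    (σ : Equiv.Perm (Fin n)) (f : (c : Fin (Finset.univ.sup lam)) → Fin (colLen lam c) → Fin n)
    (r : Fin n) (c : Fin (Finset.univ.sup lam)) :
    augFill lam σ (colEquiv lam hpart f) r (c.1 + 1) = colExt σ (f c) r := by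
  unfold augFill colExt
  have h := lt_colLen lam hpart r c.1
  by_cases hc : c.1 < lam r
  · rw [dif_pos (⟨by omega, hc⟩ : 1 ≤ c.1 + 1 ∧ c.1 + 1 ≤ lam r), dif_pos (h.2 hc)]
    rfl
  · rw [dif_neg (fun h' => hc h'.2), dif_neg (fun h' => hc (h.1 h'))]

lemma augFill_cons (lam : Fin n → ℕ) (hpart : ∀ i j : Fin n, i ≤ j → lam j ≤ lam i)
    (σ : Equiv.Perm (Fin n)) (f : (c : Fin (Finset.univ.sup lam)) → Fin (colLen lam c) → Fin n)
    (r : Fin n) (c : Fin (Finset.univ.sup lam + 1)) :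
    augFill lam σ (colEquiv lam hpart f) r c.1 =
      (Fin.cons (fun r => σ r) (fun c => colExt σ (f c)) :
        Fin (Finset.univ.sup lam + 1) → Fin n → Fin n) c r := by
  refine Fin.cases ?_ (fun c => ?_) c
  · simp [augFill]
  · rw [Fin.cons_succ, Fin.val_succ, augFill_colEquiv]

lemma macE_q_one (lam : Fin n → ℕ) (hpart : ∀ i j : Fin n, i ≤ j → lam j ≤ lam i)
    (σ : Equiv.Perm (Fin n)) (t : K) (ht : ∀ k, 0 < k → t ^ k ≠ 1) :
    macE K lam σ 1 t = ∏ c : Fin (Finset.univ.sup lam), esymm (Fin n) K (colLen lam c) := by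
  unfold macE
  rw [Finset.sum_congr rfl fun G _ => summand_eq lam hpart t (augFill lam σ G),
    ← (colEquiv lam hpart).sum_comp]
  rw [← chain_sum (Y := Fin n → Fin n) (Finset.univ.sup lam)
    (fun c => Fin (colLen lam c) → Fin n)
    (fun c x => colExt σ x)
    (fun c y x => colW t (fun i => y (Fin.castLE (colLen_le lam c) i)) x)
    (fun c => esymm (Fin n) K (colLen lam c))
    (fun c y => colW_sum t ht _ _) (fun r => σ r)]
  refine Finset.sum_congr rfl fun f _ => Finset.prod_congr rfl fun c _ => ?_
  congr 1
  · funext i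
    exact augFill_cons lam hpart σ f _ c.castSucc
  · funext i
    unfold colOf
    rw [augFill_colEquiv]
    exact dif_pos i.2

lemma ratX_pow_ne (k : ℕ) (hk : 0 < k) : (RatFunc.X : RatFunc ℂ) ^ k ≠ 1 := by
  intro h
  rw [← RatFunc.algebraMap_X, ← map_pow, ← map_one (algebraMap (Polynomial ℂ) (RatFunc ℂ))] at h
  have h2 := RatFunc.algebraMap_injective ℂ h
  have h3 := congrArg Polynomial.natDegree h2
  simp at h3
  omega

end helpers

/-- for a partition `λ` and any basement `σ`, at `q = 1` the
permuted-basement Macdonald polynomial is independent of `σ` and `t` and equals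
`e_{λ'}(x) = ∏_{k=1}^{λ₁} e_{λ'_k}(x)`, where `λ'_k = #{i : λ i ≥ k}`. -/
theorem macE_partition_q_one {n : ℕ} (lam : Fin n → ℕ)
    (hpart : ∀ i j : Fin n, i ≤ j → lam j ≤ lam i) (σ : Equiv.Perm (Fin n)) :
    macE (RatFunc ℂ) lam σ 1 RatFunc.X =
      ∏ k ∈ Finset.Icc 1 (Finset.univ.sup lam),
        esymm (Fin n) (RatFunc ℂ) ((Finset.univ.filter (fun i => k ≤ lam i)).card) := by
  rw [macE_q_one lam hpart σ RatFunc.X ratX_pow_ne,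
    Fin.prod_univ_eq_prod_range (fun c => esymm (Fin n) (RatFunc ℂ) (colLen lam c))]
  symm
  refine Finset.prod_bij (fun c _ => c - 1) ?_ ?_ ?_ ?_
  · intro c hc
    rw [Finset.mem_Icc] at hc
    rw [Finset.mem_range]
    omega
  · intro a ha b hb h
    rw [Finset.mem_Icc] at ha hb
    omega
  · intro c hc
    rw [Finset.mem_range] at hc
    exact ⟨c + 1, Finset.mem_Icc.2 ⟨by omega, hc⟩, by omega⟩
  · intro c hc
    rw [Finset.mem_Icc] at hc
    unfold colLen
    rw [Nat.sub_add_cancel hc.1]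

end
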